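/- Let 0 < r < 2 and m ∈ ℕ, m ≥ 1, and let K ≥ 0 be a constant such that for every N ∈ ℕ and every array of real scalars (y_{i₁…i_m})_{i₁,…,i_m=1}^{N} one has (∑_{i₁,…,i_m=1}^{N} |y_{i₁…i_m}|²)^{1/2} ≤ K · (∫_{[0,1]^m} |∑_{i₁,…,i_m=1}^{N} r_{i₁}(t₁)···r_{i_m}(t_m) y_{i₁…i_m}|^{r} dt₁···dt_m)^{1/r}. Then K ≥ (A_r)^m; that is, the optimal constant in the multiple Khintchine inequality is exactly (A_r)^m. -/

import Mathlib

open MeasureTheory Real Filter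

/-- The `j`-th Rademacher function, `r_j(t) = sgn(sin(2^j π t))`. -/
noncomputable def rademacher (j : ℕ) (t : ℝ) : ℝ :=
  Real.sign (Real.sin ((2 : ℝ) ^ j * Real.pi * t))

/-- `p₀ ∈ (1,2)` is the unique solution of `Γ((p₀+1)/2) = √π / 2`. -/
noncomputable def khintchineP0 : ℝ :=
  sInf {p : ℝ | 1 < p ∧ p < 2 ∧ Real.Gamma ((p + 1) / 2) = Real.sqrt Real.pi / 2}

/-- The optimal constant `A_r` in the Khintchine inequality. -/
noncomputable def khintchineA (r : ℝ) : ℝ :=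
  if r ≤ khintchineP0 then (2 : ℝ) ^ (1 / r - 1 / 2)
  else if r < 2 then
    (1 / Real.sqrt 2) * (Real.Gamma ((r + 1) / 2) / Real.sqrt Real.pi) ^ (-(1 / r))
  else 1

/-- The `ℓ_p` norm of a vector in `ℝⁿ` (for finite `p`). -/
noncomputable def lpNorm (p : ℝ) {n : ℕ} (x : Fin n → ℝ) : ℝ :=
  (∑ i, |x i| ^ p) ^ (1 / p)

/-- The `ℓ_∞` norm of a vector in `ℝⁿ`. -/
noncomputable def linfNorm {n : ℕ} (x : Fin n → ℝ) : ℝ :=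
  ⨆ i, |x i|

lemma measurable_rademacher (j : ℕ) : Measurable (rademacher j) := by
  have h : Measurable Real.sign := by
    unfold Real.sign
    exact Measurable.ite measurableSet_Iio measurable_const
      (Measurable.ite measurableSet_Ioi measurable_const measurable_const)
  unfold rademacher
  exact h.comp (by fun_prop)

lemma abs_rademacher_le_one (j : ℕ) (t : ℝ) : |rademacher j t| ≤ 1 := by
  unfold rademacher
  rcases Real.sign_apply_eq (Real.sin ((2 : ℝ) ^ j * Real.pi * t)) with h | h | h <;> simp [h]

lemma rademacher_succ_div_two (j : ℕ) (t : ℝ) :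
    rademacher (j + 1) (t / 2) = rademacher j t := by
  unfold rademacher
  congr 2
  ring

lemma rademacher_succ_succ_div_two_add_half (j : ℕ) (t : ℝ) :
    rademacher (j + 2) (t / 2 + 1 / 2) = rademacher (j + 1) t := by
  unfold rademacher
  have : (2 : ℝ) ^ (j + 2) * π * (t / 2 + 1 / 2)
      = 2 ^ (j + 1) * π * t + ((2 ^ j : ℕ) : ℝ) * (2 * π) := by
    push_cast; ring
  rw [this, Real.sin_add_nat_mul_two_pi]

lemma rademacher_one_div_two {t : ℝ} (h0 : 0 < t) (h1 : t < 1) : rademacher 1 (t / 2) = 1 := by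
  unfold rademacher
  apply Real.sign_of_pos
  apply Real.sin_pos_of_pos_of_lt_pi
  · positivity
  · nlinarith [Real.pi_pos]

lemma rademacher_one_div_two_add_half {t : ℝ} (h0 : 0 < t) (h1 : t < 1) :
    rademacher 1 (t / 2 + 1 / 2) = -1 := by
  unfold rademacher
  apply Real.sign_of_neg
  have : (2 : ℝ) ^ 1 * π * (t / 2 + 1 / 2) = π * t + π := by ring
  rw [this, Real.sin_add_pi, neg_lt_zero]
  apply Real.sin_pos_of_pos_of_lt_pi
  · positivity
  · nlinarith [Real.pi_pos]

/-- The sum of the first `n` Rademacher functions. -/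
noncomputable def rademacherSum (n : ℕ) (t : ℝ) : ℝ :=
  ∑ j ∈ Finset.range n, rademacher (j + 1) t

@[simp]
lemma rademacherSum_zero (t : ℝ) : rademacherSum 0 t = 0 := by simp [rademacherSum]

lemma measurable_rademacherSum (n : ℕ) : Measurable (rademacherSum n) := by
  unfold rademacherSum
  exact Finset.measurable_fun_sum _ fun j _ => measurable_rademacher (j + 1)

lemma abs_rademacherSum_le (n : ℕ) (t : ℝ) : |rademacherSum n t| ≤ n := by
  unfold rademacherSum
  refine (Finset.abs_sum_le_sum_abs _ _).trans ?_
  refine (Finset.sum_le_sum fun j _ => abs_rademacher_le_one (j + 1) t).trans ?_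
  simp

lemma rademacherSum_succ_div_two {t : ℝ} (h0 : 0 < t) (h1 : t < 1) (n : ℕ) :
    rademacherSum (n + 1) (t / 2) = 1 + rademacherSum n t := by
  simp only [rademacherSum]
  rw [Finset.sum_range_succ', add_comm, zero_add, rademacher_one_div_two h0 h1]
  simp_rw [rademacher_succ_div_two]

lemma rademacherSum_succ_div_two_add_half {t : ℝ} (h0 : 0 < t) (h1 : t < 1) (n : ℕ) :
    rademacherSum (n + 1) (t / 2 + 1 / 2) = -1 + rademacherSum n t := by
  simp only [rademacherSum]
  rw [Finset.sum_range_succ', add_comm, zero_add, rademacher_one_div_two_add_half h0 h1]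
  simp_rw [rademacher_succ_succ_div_two_add_half]

section

variable {E : Type*} [NormedAddCommGroup E]

lemma integrable_comp_rademacherSum {P : Measure ℝ} [IsFiniteMeasure P] {G : ℝ → E}
    (hG : Continuous G) (n : ℕ) : Integrable (fun t => G (rademacherSum n t)) P := by
  obtain ⟨C, hC⟩ := (isCompact_Icc (a := -(n : ℝ)) (b := n)).exists_bound_of_continuousOn
    hG.continuousOn
  refine Integrable.of_bound (C := C) ?_ (ae_of_all _ fun t => ?_)
  · exact hG.comp_aestronglyMeasurable (measurable_rademacherSum n).aestronglyMeasurable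
  · exact hC _ (abs_le.mp (abs_rademacherSum_le n t))

/-- Conditioning on the first Rademacher function. -/
lemma integral_comp_rademacherSum_succ [NormedSpace ℝ E] {G : ℝ → E} (hG : Continuous G)
    (n : ℕ) :
    ∫ t in Set.Icc (0 : ℝ) 1, G (rademacherSum (n + 1) t)
      = (1 / 2 : ℝ) • (∫ t in Set.Icc (0 : ℝ) 1, G (1 + rademacherSum n t))
        + (1 / 2 : ℝ) • (∫ t in Set.Icc (0 : ℝ) 1, G (-1 + rademacherSum n t)) := by
  simp_rw [integral_Icc_eq_integral_Ioc, ← intervalIntegral.integral_of_le zero_le_one]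
  have hint (a b : ℝ) :
      IntervalIntegrable (fun t => G (rademacherSum (n + 1) t)) volume a b :=
    ⟨integrable_comp_rademacherSum hG _, integrable_comp_rademacherSum hG _⟩
  rw [← intervalIntegral.integral_add_adjacent_intervals (hint 0 (1 / 2)) (hint (1 / 2) 1)]
  have h1 := intervalIntegral.integral_comp_div (a := 0) (b := 1)
    (fun t => G (rademacherSum (n + 1) t)) (two_ne_zero (α := ℝ))
  have h2 := intervalIntegral.integral_comp_div_add (a := 0) (b := 1)
    (fun t => G (rademacherSum (n + 1) t)) (two_ne_zero (α := ℝ)) (1 / 2)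
  have e1 : ∫ t in (0 : ℝ)..1, G (rademacherSum (n + 1) (t / 2))
      = ∫ t in (0 : ℝ)..1, G (1 + rademacherSum n t) := by
    apply intervalIntegral.integral_congr_uIoo
    intro t ht
    rw [Set.uIoo_of_le zero_le_one] at ht
    simp only [rademacherSum_succ_div_two ht.1 ht.2]
  have e2 : ∫ t in (0 : ℝ)..1, G (rademacherSum (n + 1) (t / 2 + 1 / 2))
      = ∫ t in (0 : ℝ)..1, G (-1 + rademacherSum n t) := by
    apply intervalIntegral.integral_congr_uIoo
    intro t ht
    rw [Set.uIoo_of_le zero_le_one] at ht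
    simp only [rademacherSum_succ_div_two_add_half ht.1 ht.2]
  rw [← e1, ← e2, h1, h2, smul_smul, smul_smul]
  norm_num

end

instance isProbabilityMeasure_restrict_Icc_zero_one :
    IsProbabilityMeasure ((volume : Measure ℝ).restrict (Set.Icc 0 1)) :=
  ⟨by simp⟩

lemma integral_comp_rademacherSum_one {E : Type*} [NormedAddCommGroup E] [NormedSpace ℝ E]
    [CompleteSpace E] {G : ℝ → E} (hG : Continuous G) :
    ∫ t in Set.Icc (0 : ℝ) 1, G (rademacherSum 1 t)
      = (1 / 2 : ℝ) • G 1 + (1 / 2 : ℝ) • G (-1) := by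
  have h := integral_comp_rademacherSum_succ hG 0
  simpa using h

lemma integral_comp_rademacherSum_two {E : Type*} [NormedAddCommGroup E] [NormedSpace ℝ E]
    [CompleteSpace E] {G : ℝ → E} (hG : Continuous G) :
    ∫ t in Set.Icc (0 : ℝ) 1, G (rademacherSum 2 t)
      = (1 / 4 : ℝ) • G 2 + (1 / 2 : ℝ) • G 0 + (1 / 4 : ℝ) • G (-2) := by
  rw [integral_comp_rademacherSum_succ hG 1,
    integral_comp_rademacherSum_one (G := fun x => G (1 + x)) (by fun_prop),
    integral_comp_rademacherSum_one (G := fun x => G (-1 + x)) (by fun_prop)]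
  norm_num
  module

lemma integral_rademacherSum_sq (n : ℕ) :
    ∫ t in Set.Icc (0 : ℝ) 1, rademacherSum n t ^ 2 = n := by
  induction n with
  | zero => simp
  | succ n ih =>
    rw [integral_comp_rademacherSum_succ (G := fun x => x ^ 2) (by fun_prop), smul_eq_mul,
      smul_eq_mul, ← mul_add, ← integral_add
        (integrable_comp_rademacherSum (G := fun x => (1 + x) ^ 2) (by fun_prop) n)
        (integrable_comp_rademacherSum (G := fun x => (-1 + x) ^ 2) (by fun_prop) n)]
    have (x : ℝ) : (1 + x) ^ 2 + (-1 + x) ^ 2 = 2 + 2 * x ^ 2 := by ring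
    simp_rw [this]
    rw [integral_add (integrable_const _)
      (integrable_comp_rademacherSum (G := fun x => 2 * x ^ 2) (by fun_prop) n),
      integral_const_mul, ih]
    simp
    ring

lemma charFun_map_rademacherSum (n : ℕ) (s : ℝ) :
    charFun (((volume : Measure ℝ).restrict (Set.Icc 0 1)).map (rademacherSum n)) s
      = Complex.cos s ^ n := by
  have key (n : ℕ) :
      charFun (((volume : Measure ℝ).restrict (Set.Icc 0 1)).map (rademacherSum n)) s
        = ∫ t in Set.Icc (0 : ℝ) 1, Complex.exp (s * rademacherSum n t * Complex.I) := by
    rw [charFun_apply_real, integral_map (measurable_rademacherSum n).aemeasurable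
      (by fun_prop)]
  rw [key]
  induction n with
  | zero => simp
  | succ n ih =>
    rw [integral_comp_rademacherSum_succ
      (G := fun x : ℝ => Complex.exp (s * x * Complex.I)) (by fun_prop)]
    have h1 (x : ℝ) : Complex.exp (s * (1 + x : ℝ) * Complex.I)
        = Complex.exp (s * Complex.I) * Complex.exp (s * x * Complex.I) := by
      rw [← Complex.exp_add]; push_cast; ring_nf
    have h2 (x : ℝ) : Complex.exp (s * (-1 + x : ℝ) * Complex.I)
        = Complex.exp (-s * Complex.I) * Complex.exp (s * x * Complex.I) := by
      rw [← Complex.exp_add]; push_cast; ring_nf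
    simp_rw [h1, h2]
    rw [integral_const_mul, integral_const_mul, ih, Complex.cos.eq_1]
    simp only [Complex.real_smul]
    push_cast
    ring

/-- The normalised Rademacher sums converge in distribution to the standard Gaussian. -/
lemma tendsto_integral_comp_rademacherSum (f : BoundedContinuousFunction ℝ ℝ) :
    Tendsto (fun n : ℕ => ∫ t in Set.Icc (0 : ℝ) 1, f ((√n)⁻¹ * rademacherSum n t)) atTop
      (nhds (∫ x, f x ∂(ProbabilityTheory.gaussianReal 0 1))) := by
  have hm (n : ℕ) : Measurable fun t => (√n)⁻¹ * rademacherSum n t :=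
    (measurable_rademacherSum n).const_mul _
  let μ (n : ℕ) : ProbabilityMeasure ℝ :=
    ⟨((volume : Measure ℝ).restrict (Set.Icc 0 1)).map fun t => (√n)⁻¹ * rademacherSum n t,
      Measure.isProbabilityMeasure_map (hm n).aemeasurable⟩
  let ν : ProbabilityMeasure ℝ := ⟨ProbabilityTheory.gaussianReal 0 1, inferInstance⟩
  have hμ : Tendsto μ atTop (nhds ν) := by
    refine ProbabilityMeasure.tendsto_of_tendsto_charFun fun t => ?_
    have h := ProbabilityTheory.tendsto_charFun_inv_sqrt_mul_pow
      (P := (volume : Measure ℝ).restrict (Set.Icc 0 1)) (X := rademacherSum 1)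
      (measurable_rademacherSum 1).aemeasurable
      (by rw [integral_comp_rademacherSum_one (G := fun x => x) (by fun_prop)]; simp)
      (by simpa using integral_rademacherSum_sq 1) t
    have hν : charFun (ν : Measure ℝ) t = Complex.exp (-t ^ 2 / 2) := by
      change charFun (ProbabilityTheory.gaussianReal 0 1) t = _
      simp [ProbabilityTheory.charFun_gaussianReal, neg_div]
    rw [hν]
    refine h.congr fun n => ?_
    change _ = charFun (((volume : Measure ℝ).restrict (Set.Icc 0 1)).map
      fun t => (√n)⁻¹ * rademacherSum n t) t
    rw [charFun_map_mul_comp (measurable_rademacherSum n).aemeasurable,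
      charFun_map_rademacherSum, charFun_map_rademacherSum, pow_one]
  refine (ProbabilityMeasure.tendsto_iff_forall_integral_tendsto.mp hμ f).congr fun n => ?_
  exact integral_map (hm n).aemeasurable f.continuous.aestronglyMeasurable

lemma integrable_abs_rpow_gaussianReal {r : ℝ} (hr : 0 < r) :
    Integrable (fun x => |x| ^ r) (ProbabilityTheory.gaussianReal 0 1) := by
  have h := ProbabilityTheory.memLp_id_gaussianReal (μ := 0) (v := 1) (⟨r, hr.le⟩ : NNReal)
  exact h.integrable_norm_rpow'

lemma integral_abs_rpow_gaussianReal {r : ℝ} (hr : 0 < r) :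
    ∫ x, |x| ^ r ∂(ProbabilityTheory.gaussianReal 0 1)
      = 2 ^ (r / 2) * (Real.Gamma ((r + 1) / 2) / √π) := by
  rw [ProbabilityTheory.integral_gaussianReal_eq_integral_smul one_ne_zero]
  have h (x : ℝ) : ProbabilityTheory.gaussianPDFReal 0 1 x • |x| ^ r
      = (√(2 * π))⁻¹ * (fun y : ℝ => y ^ r * rexp (-(1 / 2) * y ^ (2 : ℝ))) |x| := by
    simp [ProbabilityTheory.gaussianPDFReal]
    ring_nf
  simp_rw [h]
  rw [integral_const_mul, integral_comp_abs (f := fun y : ℝ => y ^ r * rexp (-(1 / 2) * y ^ (2 : ℝ))),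
    integral_rpow_mul_exp_neg_mul_rpow two_pos
    (by linarith) (by norm_num), Real.sqrt_mul (by norm_num)]
  have e : (1 / 2 : ℝ) ^ (-(r + 1) / 2) = 2 ^ (r / 2) * √2 := by
    rw [one_div, Real.inv_rpow (by norm_num), ← Real.rpow_neg (by norm_num), Real.sqrt_eq_rpow,
      ← Real.rpow_add (by norm_num)]
    congr 1
    ring
  rw [e]
  have : √2 ≠ 0 := by positivity
  have : √π ≠ 0 := by positivity
  field_simp

lemma abs_rpow_le_min_rpow_add {r M : ℝ} (hr2 : r < 2) (hM : 0 < M) (x : ℝ) :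
    |x| ^ r ≤ (min |x| M) ^ r + M ^ (r - 2) * x ^ 2 := by
  rcases le_or_gt |x| M with h | h
  · rw [min_eq_left h]
    have : 0 ≤ M ^ (r - 2) * x ^ 2 := by positivity
    linarith
  · have hx : 0 < |x| := hM.trans h
    have h1 : |x| ^ r = |x| ^ (r - 2) * x ^ 2 := by
      rw [← sq_abs x, ← Real.rpow_natCast, ← Real.rpow_add hx]
      norm_num
    have h2 : |x| ^ (r - 2) ≤ M ^ (r - 2) :=
      Real.rpow_le_rpow_of_nonpos hM h.le (by linarith)
    have h3 : 0 ≤ (min |x| M) ^ r := by positivity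
    rw [h1]
    nlinarith [mul_le_mul_of_nonneg_right h2 (sq_nonneg x)]

lemma eventually_integral_abs_rademacherSum_rpow_lt {r δ : ℝ} (hr0 : 0 < r) (hr2 : r < 2)
    (hδ : ∫ x, |x| ^ r ∂(ProbabilityTheory.gaussianReal 0 1) < δ) :
    ∀ᶠ n : ℕ in atTop,
      ∫ t in Set.Icc (0 : ℝ) 1, |(√n)⁻¹ * rademacherSum n t| ^ r < δ := by
  set γ := ∫ x, |x| ^ r ∂(ProbabilityTheory.gaussianReal 0 1)
  have hlim : Tendsto (fun M : ℝ => M ^ (r - 2)) atTop (nhds 0) := by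
    simpa using tendsto_rpow_neg_atTop (y := 2 - r) (by linarith)
  obtain ⟨M, hMδ, hM⟩ := ((hlim.eventually_lt_const (half_pos (sub_pos.mpr hδ))).and
    (eventually_gt_atTop 0)).exists
  have hcont : Continuous fun x : ℝ => (min |x| M) ^ r :=
    (continuous_abs.min continuous_const).rpow_const fun _ => Or.inr hr0.le
  let f : BoundedContinuousFunction ℝ ℝ :=
    BoundedContinuousFunction.ofNormedAddCommGroup (fun x => (min |x| M) ^ r) hcont (M ^ r)
      fun x => by
        rw [Real.norm_of_nonneg (by positivity)]
        exact Real.rpow_le_rpow (by positivity) (min_le_right _ _) hr0.le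
  have hfγ : ∫ x, f x ∂(ProbabilityTheory.gaussianReal 0 1) ≤ γ :=
    integral_mono (f.integrable _) (integrable_abs_rpow_gaussianReal hr0) fun x =>
      Real.rpow_le_rpow (by positivity) (min_le_left _ _) hr0.le
  have hev := (tendsto_integral_comp_rademacherSum f).eventually_lt_const
    (show _ < γ + (δ - γ) / 2 by linarith)
  filter_upwards [hev, eventually_gt_atTop 0] with n hn hn0
  have hn0' : (0 : ℝ) < n := by exact_mod_cast hn0
  have i1 : Integrable (fun t => |(√n)⁻¹ * rademacherSum n t| ^ r)
      ((volume : Measure ℝ).restrict (Set.Icc 0 1)) :=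
    integrable_comp_rademacherSum (G := fun x => |(√n)⁻¹ * x| ^ r)
      (Continuous.rpow_const (by fun_prop) fun _ => Or.inr hr0.le) n
  have i2 : Integrable (fun t => f ((√n)⁻¹ * rademacherSum n t))
      ((volume : Measure ℝ).restrict (Set.Icc 0 1)) :=
    integrable_comp_rademacherSum (G := fun x => f ((√n)⁻¹ * x)) (by fun_prop) n
  have i3 : Integrable (fun t => M ^ (r - 2) * ((√n)⁻¹ * rademacherSum n t) ^ 2)
      ((volume : Measure ℝ).restrict (Set.Icc 0 1)) :=
    integrable_comp_rademacherSum (G := fun x => M ^ (r - 2) * ((√n)⁻¹ * x) ^ 2)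
      (by fun_prop) n
  have hle := integral_mono i1 (i2.add i3) fun t => abs_rpow_le_min_rpow_add hr2 hM _
  have hsq : ∫ t in Set.Icc (0 : ℝ) 1, M ^ (r - 2) * ((√n)⁻¹ * rademacherSum n t) ^ 2
      = M ^ (r - 2) := by
    simp_rw [mul_pow]
    rw [integral_const_mul, integral_const_mul, integral_rademacherSum_sq, inv_pow,
      Real.sq_sqrt hn0'.le, inv_mul_cancel₀ hn0'.ne', mul_one]
  simp only [Pi.add_apply] at hle
  rw [integral_add i2 i3, hsq] at hle
  linarith

/-- For a constant array the Rademacher chaos factors as a product of Rademacher sums. -/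
lemma integral_abs_sum_prod_rademacher_rpow (r : ℝ) (m N : ℕ) :
    ∫ t : Fin m → ℝ in Set.Icc 0 1,
      |∑ i : Fin m → Fin N, (∏ k, rademacher ((i k).1 + 1) (t k)) * 1| ^ r
      = (∫ t in Set.Icc (0 : ℝ) 1, |rademacherSum N t| ^ r) ^ m := by
  have hset : (Set.Icc 0 1 : Set (Fin m → ℝ)) = Set.univ.pi fun _ => Set.Icc (0 : ℝ) 1 :=
    (Set.pi_univ_Icc 0 1).symm
  have hfac (t : Fin m → ℝ) :
      |∑ i : Fin m → Fin N, (∏ k, rademacher ((i k).1 + 1) (t k)) * 1| ^ r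
        = ∏ k, |rademacherSum N (t k)| ^ r := by
    rw [Real.finsetProd_rpow _ _ fun _ _ => abs_nonneg _, ← Finset.abs_prod]
    simp_rw [mul_one, rademacherSum, Finset.sum_range]
    rw [Finset.prod_univ_sum, Fintype.piFinset_univ]
  simp_rw [hfac]
  rw [hset, volume_pi, Measure.restrict_pi_pi,
    integral_fintype_prod_eq_prod (f := fun _ x => |rademacherSum N x| ^ r)]
  simp

/-- Optimality: any constant in the multiple Khintchine inequality (`0 < r < 2`) is at
least `(A_r)^m`. -/
theorem multiple_khintchine_optimal (r : ℝ) (hr0 : 0 < r) (hr2 : r < 2)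
    (m : ℕ) (hm : 1 ≤ m) (K : ℝ) (hK : 0 ≤ K)
    (h : ∀ (N : ℕ) (y : (Fin m → Fin N) → ℝ),
      (∑ i : Fin m → Fin N, |y i| ^ (2 : ℝ)) ^ ((1 : ℝ) / 2)
        ≤ K * (∫ t : Fin m → ℝ in Set.Icc 0 1,
            |∑ i : Fin m → Fin N,
              (∏ k, rademacher ((i k).1 + 1) (t k)) * y i| ^ r) ^ (1 / r)) :
    khintchineA r ^ m ≤ K := by
  have hmain (N : ℕ) : (N : ℝ) ^ ((m : ℝ) / 2)
      ≤ K * (∫ t in Set.Icc (0 : ℝ) 1, |rademacherSum N t| ^ r) ^ ((m : ℝ) / r) := by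
    have h1 := h N fun _ => 1
    rw [integral_abs_sum_prod_rademacher_rpow, ← Real.rpow_natCast (∫ t in _, _) m,
      ← Real.rpow_mul (by positivity), mul_one_div] at h1
    convert h1 using 1
    simp only [abs_one, Real.one_rpow, Finset.sum_const, Finset.card_univ, Fintype.card_pi,
      Fintype.card_fin, Finset.prod_const, nsmul_eq_mul, mul_one, Nat.cast_pow]
    rw [← Real.rpow_natCast, ← Real.rpow_mul (by positivity), mul_one_div]
  have hle {a : ℝ} (ha : 0 < a) (h1 : 1 ≤ K * a ^ ((m : ℝ) / r)) : (a ^ (-(1 / r))) ^ m ≤ K := by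
    rw [← Real.rpow_natCast, ← Real.rpow_mul ha.le, neg_mul, one_div_mul_eq_div,
      Real.rpow_neg ha.le]
    exact (inv_le_iff_one_le_mul₀ (by positivity)).mpr h1
  have htwo : ((2 : ℝ) ^ (1 / r - 1 / 2)) ^ m ≤ K := by
    have h2 := hmain 2
    rw [integral_comp_rademacherSum_two (G := fun x => |x| ^ r)
      (Continuous.rpow_const (by fun_prop) fun _ => Or.inr hr0.le)] at h2
    simp only [abs_neg, abs_zero, Real.zero_rpow hr0.ne', smul_eq_mul, mul_zero, add_zero,
      Nat.abs_ofNat, Nat.cast_ofNat] at h2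
    have e : (1 / 4 : ℝ) * 2 ^ r + 1 / 4 * 2 ^ r = 2 ^ (r - 1) := by
      rw [Real.rpow_sub_one two_ne_zero]; ring
    rw [e, ← Real.rpow_mul two_pos.le] at h2
    have h3 := hle (a := (2 : ℝ) ^ (r / 2 - 1)) (by positivity) (by
      rw [← Real.rpow_mul two_pos.le]
      have e2 : (r / 2 - 1) * (m / r) = (r - 1) * (m / r) - m / 2 := by field_simp; ring
      rw [e2, Real.rpow_sub two_pos, ← mul_div_assoc, one_le_div (by positivity)]
      exact h2)
    rw [← Real.rpow_mul two_pos.le] at h3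
    convert h3 using 3
    field_simp
    ring
  have hgauss : ((1 / √2) * (Real.Gamma ((r + 1) / 2) / √π) ^ (-(1 / r))) ^ m ≤ K := by
    have hΓ : 0 < Real.Gamma ((r + 1) / 2) / √π :=
      div_pos (Real.Gamma_pos_of_pos (by linarith)) (by positivity)
    set γ := ∫ x, |x| ^ r ∂(ProbabilityTheory.gaussianReal 0 1)
    have hγ' : γ = 2 ^ (r / 2) * (Real.Gamma ((r + 1) / 2) / √π) :=
      integral_abs_rpow_gaussianReal hr0
    have hγ0 : 0 < γ := by rw [hγ']; positivity
    have hδ (δ : ℝ) (hδ : γ < δ) : 1 ≤ K * δ ^ ((m : ℝ) / r) := by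
      obtain ⟨n, hn, hn0⟩ := ((eventually_integral_abs_rademacherSum_rpow_lt hr0 hr2 hδ).and
        (eventually_gt_atTop 0)).exists
      have hn0' : (0 : ℝ) < n := by exact_mod_cast hn0
      simp_rw [abs_mul, Real.mul_rpow (abs_nonneg _) (abs_nonneg _)] at hn
      rw [integral_const_mul, abs_of_pos (by positivity), Real.inv_rpow (by positivity),
        Real.sqrt_eq_rpow, ← Real.rpow_mul hn0'.le, inv_mul_lt_iff₀ (by positivity)] at hn
      have h1 := (hmain n).trans (mul_le_mul_of_nonneg_left
        (Real.rpow_le_rpow (by positivity) hn.le (by positivity)) hK)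
      rw [Real.mul_rpow (by positivity) (hγ0.trans hδ).le, ← Real.rpow_mul hn0'.le] at h1
      have e : 1 / 2 * r * (m / r) = (m : ℝ) / 2 := by field_simp
      rw [e, mul_left_comm] at h1
      exact (le_mul_iff_one_le_right (by positivity)).mp h1
    have hlim : 1 ≤ K * γ ^ ((m : ℝ) / r) := by
      have hc : Tendsto (fun δ : ℝ => K * δ ^ ((m : ℝ) / r)) (nhdsWithin γ (Set.Ioi γ))
          (nhds (K * γ ^ ((m : ℝ) / r))) :=
        (((Real.continuousAt_rpow_const γ _ (Or.inl hγ0.ne')).const_mul K).tendsto).mono_left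
          nhdsWithin_le_nhds
      exact ge_of_tendsto hc (eventually_nhdsWithin_of_forall hδ)
    convert hle hγ0 hlim using 2
    rw [hγ', Real.mul_rpow (by positivity) hΓ.le, ← Real.rpow_mul two_pos.le, Real.sqrt_eq_rpow,
      one_div, ← Real.rpow_neg two_pos.le]
    congr 2
    field_simp
  unfold khintchineA
  rw [if_pos hr2]
  split_ifs
  exacts [htwo, hgauss]
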